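/- Assume F ∈ K̄(x,y) satisfies D₀(F) = −A·∂y(B/A)·F − A·∂y²(B/A). Set div := ∂x(A) + ∂y(B), Ω₁ := F − ∂y(A)/A and Ω₂ := (−div − B·Ω₁)/A. Then ∂x(Ω₁) = ∂y(Ω₂), i.e. the 1-form Ω₂·dx + Ω₁·dy is closed. (More precisely, one always has the identity ∂x(Ω₁) − ∂y(Ω₂) = ∂x(F) + (B/A)·∂y(F) + ∂y(B/A)·F + ∂y²(B/A), whose right-hand side vanishes under the stated hypothesis.) -/

import Mathlib

/-!
The identity is a computation in any field with two additive maps obeying the Leibniz rule. By the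
quotient rule both sides become rational expressions in `a`, `b` (the images of `A`, `B` in
`K̄(x,y)`), `F` and their derivatives (`quotient_identity`), and the only terms which do not cancel formally are the two second-order
mixed ones, `∂x ∂y a / a` and `∂y ∂x a / a`; these agree because partial derivatives of
polynomials commute (`pderiv_pderiv_comm`). The closedness statement follows because the cofactor
equation says that `a` times the right-hand side of the identity vanishes.
-/

/-!
# Closedness of the Liouvillian integrating-factor 1-form (from Proposition `proprepresent`)

`K` is a field of characteristic zero with algebraic closure `K̄`, `A, B ∈ K[x,y]` with
`A ≠ 0`, `D₀ = A ∂x + B ∂y`, `div = ∂x(A) + ∂y(B)`.  The partial derivations `∂x`, `∂y`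
extend uniquely to `K̄(x,y)`; they are encoded below as additive maps satisfying the Leibniz
rule which agree with `pderiv` on polynomials, and `D₀(F) = A·∂x(F) + B·∂y(F)` on `K̄(x,y)`.

For `F ∈ K̄(x,y)`, set `Ω₁ = F − ∂y(A)/A` and `Ω₂ = (−div − B·Ω₁)/A`.  Then one always has
`∂x(Ω₁) − ∂y(Ω₂) = ∂x(F) + (B/A)·∂y(F) + ∂y(B/A)·F + ∂y²(B/A)`; in particular, if
`D₀(F) = −A·∂y(B/A)·F − A·∂y²(B/A)` then `∂x(Ω₁) = ∂y(Ω₂)`, i.e. the 1-form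
`Ω₂·dx + Ω₁·dy` is closed.  Here `∂y(B/A) = w₁/A²`, `∂y²(B/A) = w₂/A³`,
`A·∂y(B/A) = w₁/A` and `A·∂y²(B/A) = w₂/A²`, with `wPol A B r = A^(r+1)·∂y^r(B/A)`.
-/

open MvPolynomial

namespace ExtacticPaper

noncomputable section

variable {L : Type*}

/-- `wPol A B r` equals `A^(r+1) * ∂y^r (B/A)` as a polynomial. -/
def wPol [CommRing L] (A B : MvPolynomial (Fin 2) L) : ℕ → MvPolynomial (Fin 2) L
  | 0 => B
  | r + 1 => A * pderiv (1 : Fin 2) (wPol A B r) - (r + 1) • (wPol A B r * pderiv (1 : Fin 2) A)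

/-- Base change of a polynomial from `K` to the algebraic closure of `K`. -/
def mapAC {K : Type*} [Field K] (p : MvPolynomial (Fin 2) K) :
    MvPolynomial (Fin 2) (AlgebraicClosure K) :=
  MvPolynomial.map (algebraMap K (AlgebraicClosure K)) p

/-- The rational function field `Kb(x,y)`. -/
abbrev FR (Kb : Type*) [Field Kb] := FractionRing (MvPolynomial (Fin 2) Kb)

/-- The canonical map `Kb[x,y] → Kb(x,y)`. -/
def toFR (Kb : Type*) [Field Kb] : MvPolynomial (Fin 2) Kb →+* FR Kb :=
  algebraMap _ _

/-- Partial derivatives commute: the commutator of two derivations is a derivation, and here it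
kills every variable. -/
theorem pderiv_pderiv_comm {R σ : Type*} [CommRing R] (i j : σ) (p : MvPolynomial σ R) :
    pderiv i (pderiv j p) = pderiv j (pderiv i p) := by
  have h : ⁅pderiv (R := R) i, pderiv (R := R) j⁆ = 0 := by
    classical
    refine MvPolynomial.derivation_ext fun k => ?_
    simp [Derivation.commutator_apply, pderiv_X, Pi.single_apply, apply_ite]
  have h' := congrArg (fun D => D p) h
  simpa [Derivation.commutator_apply, sub_eq_zero] using h'

section Leibniz

variable {E : Type*} [Field E] {δ : E → E}

theorem leibniz_neg (ha : ∀ a b, δ (a + b) = δ a + δ b) (u : E) : δ (-u) = -δ u :=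
  (AddMonoidHom.mk' δ ha).map_neg u

theorem leibniz_sub (ha : ∀ a b, δ (a + b) = δ a + δ b) (u v : E) : δ (u - v) = δ u - δ v :=
  (AddMonoidHom.mk' δ ha).map_sub u v

theorem leibniz_div (hm : ∀ a b, δ (a * b) = δ a * b + a * δ b) (u : E) {a : E} (h : a ≠ 0) :
    δ (u / a) = (δ u * a - u * δ a) / a ^ 2 := by
  have h1 := hm (u / a) a
  rw [div_mul_cancel₀ u h] at h1
  rw [h1]
  field_simp
  ring

end Leibniz

/-- The identity in an abstract field: `δx (δy a) = δy (δx a)` is the only commutation needed. -/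
theorem quotient_identity {E : Type*} [Field E] {δx δy : E → E}
    (hxa : ∀ a b, δx (a + b) = δx a + δx b) (hxm : ∀ a b, δx (a * b) = δx a * b + a * δx b)
    (hya : ∀ a b, δy (a + b) = δy a + δy b) (hym : ∀ a b, δy (a * b) = δy a * b + a * δy b)
    {a b : E} (h0 : a ≠ 0) (hc : δx (δy a) = δy (δx a)) (F : E) :
    δx (F - δy a / a) - δy ((-(δx a + δy b) - b * (F - δy a / a)) / a)
      = δx F + (b / a) * δy F + ((a * δy b - b * δy a) / a ^ 2) * F
        + (a * δy (a * δy b - b * δy a) - 2 * ((a * δy b - b * δy a) * δy a)) / a ^ 3 := by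
  simp only [leibniz_sub hxa, leibniz_sub hya, leibniz_neg hya, leibniz_div hxm _ h0,
    leibniz_div hym _ h0, hya, hym, hc]
  field_simp
  ring

/-- **Closedness of the 1-form `Ω₂ dx + Ω₁ dy`** (Chèze–Combot, inside the proof of
Proposition `proprepresent`, Liouvillian case). -/
theorem liouvillian_integrating_factor_closed {K : Type*} [Field K] [CharZero K]
    (A B : MvPolynomial (Fin 2) K) (hA : A ≠ 0)
    -- the unique extension of `∂x` to `K̄(x,y)`
    (δx : FR (AlgebraicClosure K) → FR (AlgebraicClosure K))
    (hδxa : ∀ a b, δx (a + b) = δx a + δx b)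
    (hδxm : ∀ a b, δx (a * b) = δx a * b + a * δx b)
    (hδxe : ∀ p : MvPolynomial (Fin 2) (AlgebraicClosure K),
      δx (toFR (AlgebraicClosure K) p) = toFR (AlgebraicClosure K) (pderiv (0 : Fin 2) p))
    -- the unique extension of `∂y` to `K̄(x,y)`
    (δy : FR (AlgebraicClosure K) → FR (AlgebraicClosure K))
    (hδya : ∀ a b, δy (a + b) = δy a + δy b)
    (hδym : ∀ a b, δy (a * b) = δy a * b + a * δy b)
    (hδye : ∀ p : MvPolynomial (Fin 2) (AlgebraicClosure K),
      δy (toFR (AlgebraicClosure K) p) = toFR (AlgebraicClosure K) (pderiv (1 : Fin 2) p))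
    (F Ω₁ Ω₂ : FR (AlgebraicClosure K))
    -- `Ω₁ = F − ∂y(A)/A`
    (hΩ₁ : Ω₁ = F - toFR (AlgebraicClosure K) (pderiv (1 : Fin 2) (mapAC A)) /
        toFR (AlgebraicClosure K) (mapAC A))
    -- `Ω₂ = (−div − B·Ω₁)/A` where `div = ∂x(A) + ∂y(B)`
    (hΩ₂ : Ω₂ = (-(toFR (AlgebraicClosure K)
            (pderiv (0 : Fin 2) (mapAC A) + pderiv (1 : Fin 2) (mapAC B)))
          - toFR (AlgebraicClosure K) (mapAC B) * Ω₁) /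
        toFR (AlgebraicClosure K) (mapAC A)) :
    -- the general identity
    (δx Ω₁ - δy Ω₂
        = δx F
          + (toFR (AlgebraicClosure K) (mapAC B) / toFR (AlgebraicClosure K) (mapAC A)) * δy F
          + (toFR (AlgebraicClosure K) (wPol (mapAC A) (mapAC B) 1) /
              toFR (AlgebraicClosure K) (mapAC A) ^ 2) * F
          + toFR (AlgebraicClosure K) (wPol (mapAC A) (mapAC B) 2) /
              toFR (AlgebraicClosure K) (mapAC A) ^ 3) ∧
    -- hence closedness under the Liouvillian cofactor equation `D₀(F) = −A∂y(B/A)F − A∂y²(B/A)`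
    ((toFR (AlgebraicClosure K) (mapAC A) * δx F + toFR (AlgebraicClosure K) (mapAC B) * δy F
        = -((toFR (AlgebraicClosure K) (wPol (mapAC A) (mapAC B) 1) /
              toFR (AlgebraicClosure K) (mapAC A)) * F)
          - toFR (AlgebraicClosure K) (wPol (mapAC A) (mapAC B) 2) /
              toFR (AlgebraicClosure K) (mapAC A) ^ 2) →
      δx Ω₁ = δy Ω₂) := by
  have h0 : toFR (AlgebraicClosure K) (mapAC A) ≠ 0 := by
    intro h
    have h1 : mapAC A = 0 :=
      IsFractionRing.injective (MvPolynomial (Fin 2) (AlgebraicClosure K))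
        (FR (AlgebraicClosure K)) (h.trans (map_zero (toFR (AlgebraicClosure K))).symm)
    exact hA (MvPolynomial.map_injective _ (algebraMap K (AlgebraicClosure K)).injective
      (h1.trans (map_zero _).symm))
  have hc : δx (δy (toFR _ (mapAC A))) = δy (δx (toFR _ (mapAC A))) := by
    rw [hδye, hδxe, hδxe, hδye, pderiv_pderiv_comm]
  have hw1 : toFR _ (wPol (mapAC A) (mapAC B) 1)
      = toFR _ (mapAC A) * δy (toFR _ (mapAC B)) - toFR _ (mapAC B) * δy (toFR _ (mapAC A)) := by
    simp [wPol, hδye]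
  have hw2 : toFR _ (wPol (mapAC A) (mapAC B) 2)
      = toFR _ (mapAC A) * δy (toFR _ (wPol (mapAC A) (mapAC B) 1))
        - 2 * (toFR _ (wPol (mapAC A) (mapAC B) 1) * δy (toFR _ (mapAC A))) := by
    rw [hδye, hδye, wPol]
    simp only [map_sub, map_mul, nsmul_eq_mul, map_natCast]
    norm_num
  have key := quotient_identity hδxa hδxm hδya hδym (b := toFR _ (mapAC B)) h0 hc F
  rw [← hw1, ← hw2, hδxe, hδye, hδye, ← map_add, ← hΩ₁, ← hΩ₂] at key
  refine ⟨key, fun hF => ?_⟩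
  rw [← sub_eq_zero, key]
  refine (mul_eq_zero.mp ?_).resolve_left h0
  -- Multiplied by `a`, the right-hand side is the cofactor equation with all terms on one side.
  rw [← sub_eq_zero] at hF
  rw [← hF]
  field_simp
  ring

end
end ExtacticPaper
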